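/- arXiv:math/0511650 — 2 statements merged into one kernel-verified Lean document; each statement's English description precedes it below -/
import Mathlib

section
/- The spider element sp = φ_a^i φ_{b₁}^i φ_{c₁}^i φ_a^i φ_{b₂}^i φ_{c₂}^i φ_a^i φ_{b₃}^i φ_{c₃}^i has order 40 in the reflection group R(L) of L = 3E₈⊕H. -/
/- Formalization over the ring ℋ of Hurwitz integers inside the real quaternions. -/

noncomputable section
open Quaternion Finset

/-- The real quaternions ℍ. -/
abbrev Quat := Quaternion ℝ

/-- The quaternion `i`. -/
def qi : Quat := ⟨0, 1, 0, 0⟩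
/-- The quaternion `j`. -/
def qj : Quat := ⟨0, 0, 1, 0⟩
/-- The quaternion `k`. -/
def qk : Quat := ⟨0, 0, 0, 1⟩
/-- `p = 1 - i`. -/
def qp : Quat := 1 - qi

/-- A quaternion is a Hurwitz integer if it is `(a+bi+cj+dk)/2` with
`a,b,c,d` integers which are all congruent mod `2`. -/
def IsHurwitz (q : Quat) : Prop :=
  ∃ a b c d : ℤ, a % 2 = b % 2 ∧ b % 2 = c % 2 ∧ c % 2 = d % 2 ∧
    q = ⟨(a : ℝ) / 2, (b : ℝ) / 2, (c : ℝ) / 2, (d : ℝ) / 2⟩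

/-- A unit of the ring ℋ of Hurwitz integers. -/
def IsUnitH (q : Quat) : Prop :=
  IsHurwitz q ∧ ∃ r : Quat, IsHurwitz r ∧ q * r = 1 ∧ r * q = 1

/-- Membership in the (two-sided) ideal `pℋ`. -/
def InPH (q : Quat) : Prop := ∃ h : Quat, IsHurwitz h ∧ q = qp * h

/-- The ambient space of the lattice `L = 3E₈ ⊕ H`: three pairs (the `E₈` summands)
together with the two coordinates of the hyperbolic cell `H`. -/
abbrev V3 : Type := (Fin 3 → Quat × Quat) × Quat × Quat

/-- The ℋ-valued form on `3E₈ ⊕ H`:  negative definite standard form on each `E₈`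
summand and the hyperbolic form `⟨(x₁,x₂),(y₁,y₂)⟩ = x̄₁ p̄ y₂ + x̄₂ p y₁` on `H`. -/
def ip3 (x y : V3) : Quat :=
  (∑ s : Fin 3, (-(star (x.1 s).1 * (y.1 s).1) - star (x.1 s).2 * (y.1 s).2))
    + star x.2.1 * star qp * y.2.2 + star x.2.2 * qp * y.2.1

/-- Membership in the `E₈` lattice: both coordinates Hurwitz and congruent mod `pℋ`. -/
def memE8 (q : Quat × Quat) : Prop := IsHurwitz q.1 ∧ IsHurwitz q.2 ∧ InPH (q.1 - q.2)

/-- Membership in the lattice `L = 3E₈ ⊕ H`. -/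
def memL3 (v : V3) : Prop := (∀ s, memE8 (v.1 s)) ∧ IsHurwitz v.2.1 ∧ IsHurwitz v.2.2

/-- Right scalar multiplication on the ambient space of `3E₈ ⊕ H`. -/
def rmul3 (v : V3) (q : Quat) : V3 :=
  (fun s => ((v.1 s).1 * q, (v.1 s).2 * q), v.2.1 * q, v.2.2 * q)

/-- The `μ`-reflection in a root `r` : `v ↦ v − r(1−μ)⟨r,v⟩/|r|²`. -/
def refl3 (r : V3) (μ : Quat) (v : V3) : V3 := v - rmul3 r ((1 - μ) * ip3 r v / ip3 r r)

/-- The root `a` of the diagram `D`. -/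
def rootA : V3 := (fun _ => (0, 0), 1, -1)
/-- The roots `c_s` of the diagram `D`. -/
def rootC (s : Fin 3) : V3 := (fun t => if t = s then ((1 : Quat), (-1 : Quat)) else 0, 0, 0)
/-- The roots `e_s` of the diagram `D` (with `(1,1)` in the two other `E₈` slots). -/
def rootE (s : Fin 3) : V3 := (fun t => if t = s then (0 : Quat × Quat) else (1, 1), -qi, -1)
/-- The root `f` of the diagram `D`. -/
def rootF : V3 := (fun _ => (0, qp), -(qi * qp), -qp)
/-- The roots `b_s` of the diagram `D`. -/
def rootB (s : Fin 3) : V3 := (fun t => if t = s then ((0 : Quat), qp) else 0, -1, 0)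
/-- The roots `d_s` of the diagram `D`. -/
def rootD (s : Fin 3) : V3 := (fun t => if t = s then (-qp, (0 : Quat)) else 0, 0, 0)

/-- The set of roots of `L`. -/
def Roots3 : Set V3 := {r | memL3 r ∧ ip3 r r = -2}

/-- The reflection group `R(L)` of `L = 3E₈ ⊕ H`, as the subgroup of permutations of the
ambient space generated by the `μ`-reflections in all roots of `L` (for all units `μ ≠ 1`). -/
def RL3 : Subgroup (Equiv.Perm V3) :=
  Subgroup.closure {g | ∃ r μ, r ∈ Roots3 ∧ IsUnitH μ ∧ μ ≠ 1 ∧ ∀ v, g v = refl3 r μ v}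

/-- The seven `points` of the diagram `D`. -/
def Pt : Fin 7 → V3 := ![rootA, rootC 0, rootC 1, rootC 2, rootE 0, rootE 1, rootE 2]
/-- The seven `lines` of the diagram `D`. -/
def Ln : Fin 7 → V3 := ![rootF, rootB 0, rootB 1, rootB 2, rootD 0, rootD 1, rootD 2]

/-- The spider element `sp = φ_a^i φ_{b₁}^i φ_{c₁}^i φ_a^i φ_{b₂}^i φ_{c₂}^i φ_a^i φ_{b₃}^i φ_{c₃}^i`. -/
def sp : V3 → V3 :=
  refl3 rootA qi ∘ refl3 (rootB 0) qi ∘ refl3 (rootC 0) qi ∘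
  refl3 rootA qi ∘ refl3 (rootB 1) qi ∘ refl3 (rootC 1) qi ∘
  refl3 rootA qi ∘ refl3 (rootB 2) qi ∘ refl3 (rootC 2) qi

/-!
Rotating the three `E₈` summands cyclically by `σ` fixes `a` and permutes the `b_s` and the `c_s`,
so the spider element is the cube of `τ = φ_a φ_{b₁} φ_{c₁} σ`. On the seven roots `τ` is very
simple: up to multiples of `a` and units its orbit runs `a → b₁ → b₂ → b₃ → c₁ → c₂ → c₃`.
The vector `u = τ⁵a + a` satisfies `τ²u = -ui`, hence `τ⁴u = -u`. Thus `(τ⁴ + 1)(τ⁵ + 1)` kills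
`a` and with it all seven roots, so composing it with any of their reflections does not change it;
in particular `(τ⁴ + 1)(τ⁵ + 1)(τ³ - 1) = 0`, and this polynomial divides `X¹²⁰ - 1`.
Conversely `τ⁶⁰` negates `u`, and `τ²⁴` cannot fix `τ⁴a + a`, as `τ²⁵` negates this vector
and `τ` does not.
-/

open scoped RightActions
open Polynomial

section Form

lemma star_ip3 (x y : V3) : star (ip3 x y) = ip3 y x := by
  simp only [ip3, Fin.sum_univ_three, star_add, star_sub, star_neg, star_mul, star_star, mul_assoc]
  abel

lemma ip3_add_right (x y z : V3) : ip3 x (y + z) = ip3 x y + ip3 x z := by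
  simp only [ip3, Fin.sum_univ_three, Prod.fst_add, Prod.snd_add, Pi.add_apply, mul_add]
  abel

lemma ip3_rsmul_right (x y : V3) (q : Quat) : ip3 x (y <• q) = ip3 x y * q := by
  simp only [ip3, Fin.sum_univ_three, Prod.smul_fst, Prod.smul_snd, Pi.smul_apply,
    MulOpposite.smul_eq_mul_unop, MulOpposite.unop_op, add_mul, sub_mul, neg_mul, mul_assoc]

lemma commute_ip3_self (r : V3) (q : Quat) : Commute (ip3 r r) q := by
  rw [Quaternion.star_eq_self.mp (star_ip3 r r)]
  exact Quaternion.coe_commutes _ q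

end Form

section Reflection

lemma refl3_eq_sub_rsmul (r : V3) (μ : Quat) (v : V3) :
    refl3 r μ v = v - r <• ((1 - μ) * ip3 r v / ip3 r r) := rfl

/-- The reflection `refl3 r μ` as an endomorphism of the right `ℍ`-module `V3`; right scalars act
through `Quatᵐᵒᵖ`, so that `v <• q` is the product `vq`. -/
def reflEnd (r : V3) (μ : Quat) : Module.End Quatᵐᵒᵖ V3 where
  toFun := refl3 r μ
  map_add' v w := by
    simp only [refl3_eq_sub_rsmul, ip3_add_right, mul_add, add_div, MulOpposite.op_add, add_smul]
    abel
  map_smul' q v := by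
    obtain ⟨q, rfl⟩ := MulOpposite.op_surjective q
    have hq : (1 - μ) * (ip3 r v * q) / ip3 r r = (1 - μ) * ip3 r v / ip3 r r * q := by
      rw [div_eq_mul_inv, div_eq_mul_inv, ← mul_assoc, mul_assoc _ q,
        ← (commute_ip3_self r q).inv_left₀.eq, mul_assoc _ _ q]
    simp only [refl3_eq_sub_rsmul, ip3_rsmul_right, hq, RingHom.id_apply, smul_sub, smul_smul,
      MulOpposite.op_mul]

variable {r v : V3}

lemma reflEnd_apply (r : V3) (μ : Quat) (v : V3) : reflEnd r μ v = refl3 r μ v := rfl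

lemma reflEnd_of_ip3_eq_zero (μ : Quat) (h : ip3 r v = 0) : reflEnd r μ v = v := by
  simp [reflEnd_apply, refl3_eq_sub_rsmul, h]

lemma reflEnd_self (μ : Quat) (h : ip3 r r ≠ 0) : reflEnd r μ r = r <• μ := by
  simp [reflEnd_apply, refl3_eq_sub_rsmul, h, sub_smul]

lemma mul_reflEnd_of_apply_eq_zero {g : Module.End Quatᵐᵒᵖ V3} (μ : Quat) (h : g r = 0) :
    g * reflEnd r μ = g := by
  refine LinearMap.ext fun v => ?_
  simp [reflEnd_apply, refl3_eq_sub_rsmul, h]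

lemma mul_reflEnd_of_isometry {g : Module.End Quatᵐᵒᵖ V3}
    (hg : ∀ x y, ip3 (g x) (g y) = ip3 x y) (r : V3) (μ : Quat) :
    g * reflEnd r μ = reflEnd (g r) μ * g := by
  refine LinearMap.ext fun v => ?_
  simp [reflEnd_apply, refl3_eq_sub_rsmul, hg]

end Reflection

section GaussianUnit

instance : CharZero Quat := charZero_of_injective_algebraMap (algebraMap ℝ Quat).injective

lemma star_qi : star qi = -qi := by
  rw [Quaternion.star_eq_neg]
  rfl

lemma normSq_qi : Quaternion.normSq qi = 1 := by
  rw [Quaternion.normSq_def']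
  simp [qi]

lemma qi_mul_qi : qi * qi = -1 := by
  rw [← neg_eq_iff_eq_neg, ← mul_neg, ← star_qi, Quaternion.self_mul_star, normSq_qi,
    Quaternion.coe_one]

lemma qi_ne_zero : qi ≠ 0 := by
  intro h
  simpa [h] using qi_mul_qi

lemma rsmul_qi_rsmul_qi (v : V3) : v <• qi <• qi = -v := by
  rw [smul_smul, ← MulOpposite.op_mul, qi_mul_qi, MulOpposite.op_neg, MulOpposite.op_one,
    neg_one_smul]

lemma star_qp : star qp = 1 + qi := by
  simp [qp, star_qi]

lemma star_qp_mul_qp : star qp * qp = 2 := by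
  rw [star_qp, qp, add_mul, mul_sub, mul_sub, qi_mul_qi, ← one_add_one_eq_two]
  noncomm_ring

lemma qp_mul_star_qp : qp * star qp = 2 := by
  rw [star_qp, qp, sub_mul, mul_add, mul_add, qi_mul_qi, ← one_add_one_eq_two]
  noncomm_ring

lemma star_qp_add_qp : star qp + qp = 2 := by
  rw [star_qp, qp, ← one_add_one_eq_two]
  abel

lemma qp_mul_qp : qp * qp = qi * -2 := by
  rw [qp, sub_mul, mul_sub, mul_sub, qi_mul_qi, ← one_add_one_eq_two]
  noncomm_ring

variable {r v : V3}

lemma reflEnd_qi_of_ip3_eq_qp (hr : ip3 r r = -2) (h : ip3 r v = qp) :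
    reflEnd r qi v = v - r <• qi := by
  have hq : (1 - qi) * ip3 r v / ip3 r r = qi := by
    rw [h, hr, ← qp, qp_mul_qp, mul_div_cancel_right₀ _ (by norm_num)]
  rw [reflEnd_apply, refl3_eq_sub_rsmul, hq]

lemma reflEnd_qi_of_ip3_eq_star_qp (hr : ip3 r r = -2) (h : ip3 r v = star qp) :
    reflEnd r qi v = v + r := by
  have hq : (1 - qi) * ip3 r v / ip3 r r = -1 := by
    rw [h, hr, ← qp, qp_mul_star_qp, div_neg, div_self two_ne_zero]
  rw [reflEnd_apply, refl3_eq_sub_rsmul, hq, MulOpposite.op_neg, MulOpposite.op_one,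
    neg_one_smul, sub_neg_eq_add]

end GaussianUnit

section Diagram

variable (s t : Fin 3)

lemma ip3_rootA_rootA : ip3 rootA rootA = -2 := by
  simp [ip3, rootA, ← star_qp_add_qp, add_comm]

lemma ip3_rootB_rootB : ip3 (rootB s) (rootB t) = if s = t then -2 else 0 := by
  simp [ip3, rootB, apply_ite Prod.fst, apply_ite Prod.snd, apply_ite star, star_qp_mul_qp,
    neg_ite, eq_comm (a := t)]

lemma ip3_rootC_rootC : ip3 (rootC s) (rootC t) = if s = t then -2 else 0 := by
  simp only [ip3, rootC, apply_ite Prod.fst, apply_ite Prod.snd, apply_ite star]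
  split_ifs with h <;> norm_num [h, eq_comm (a := t)]

lemma ip3_rootA_rootB : ip3 rootA (rootB s) = qp := by
  simp [ip3, rootA, rootB]

lemma ip3_rootB_rootA : ip3 (rootB s) rootA = star qp := by
  rw [← star_ip3, ip3_rootA_rootB]

lemma ip3_rootA_rootC : ip3 rootA (rootC s) = 0 := by
  simp [ip3, rootA, rootC]

lemma ip3_rootC_rootB : ip3 (rootC s) (rootB t) = if s = t then qp else 0 := by
  simp [ip3, rootC, rootB, apply_ite Prod.fst, apply_ite Prod.snd, apply_ite star, neg_ite,
    eq_comm (a := t)]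

lemma ip3_rootB_rootC : ip3 (rootB s) (rootC t) = if s = t then star qp else 0 := by
  rw [← star_ip3, ip3_rootC_rootB, apply_ite star, star_zero]
  simp only [eq_comm]

end Diagram

section RootAction

variable (s : Fin 3) {t : Fin 3}

lemma reflEnd_rootA_rootA : reflEnd rootA qi rootA = rootA <• qi :=
  reflEnd_self qi (by rw [ip3_rootA_rootA]; norm_num)

lemma reflEnd_rootA_rootB : reflEnd rootA qi (rootB s) = rootB s - rootA <• qi :=
  reflEnd_qi_of_ip3_eq_qp ip3_rootA_rootA (ip3_rootA_rootB s)

lemma reflEnd_rootA_rootC : reflEnd rootA qi (rootC s) = rootC s :=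
  reflEnd_of_ip3_eq_zero qi (ip3_rootA_rootC s)

lemma reflEnd_rootB_rootA : reflEnd (rootB s) qi rootA = rootA + rootB s :=
  reflEnd_qi_of_ip3_eq_star_qp (by simp [ip3_rootB_rootB]) (ip3_rootB_rootA s)

lemma reflEnd_rootB_rootB_self : reflEnd (rootB s) qi (rootB s) = rootB s <• qi :=
  reflEnd_self qi (by simp [ip3_rootB_rootB])

lemma reflEnd_rootB_rootB_of_ne (h : s ≠ t) : reflEnd (rootB s) qi (rootB t) = rootB t :=
  reflEnd_of_ip3_eq_zero qi (by simp [ip3_rootB_rootB, h])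

lemma reflEnd_rootB_rootC_self : reflEnd (rootB s) qi (rootC s) = rootC s + rootB s :=
  reflEnd_qi_of_ip3_eq_star_qp (by simp [ip3_rootB_rootB]) (by simp [ip3_rootB_rootC])

lemma reflEnd_rootB_rootC_of_ne (h : s ≠ t) : reflEnd (rootB s) qi (rootC t) = rootC t :=
  reflEnd_of_ip3_eq_zero qi (by simp [ip3_rootB_rootC, h])

lemma reflEnd_rootC_rootA : reflEnd (rootC s) qi rootA = rootA :=
  reflEnd_of_ip3_eq_zero qi (by rw [← star_ip3, ip3_rootA_rootC, star_zero])

lemma reflEnd_rootC_rootB_self : reflEnd (rootC s) qi (rootB s) = rootB s - rootC s <• qi :=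
  reflEnd_qi_of_ip3_eq_qp (by simp [ip3_rootC_rootC]) (by simp [ip3_rootC_rootB])

lemma reflEnd_rootC_rootB_of_ne (h : s ≠ t) : reflEnd (rootC s) qi (rootB t) = rootB t :=
  reflEnd_of_ip3_eq_zero qi (by simp [ip3_rootC_rootB, h])

lemma reflEnd_rootC_rootC_self : reflEnd (rootC s) qi (rootC s) = rootC s <• qi :=
  reflEnd_self qi (by simp [ip3_rootC_rootC])

lemma reflEnd_rootC_rootC_of_ne (h : s ≠ t) : reflEnd (rootC s) qi (rootC t) = rootC t :=
  reflEnd_of_ip3_eq_zero qi (by simp [ip3_rootC_rootC, h])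

end RootAction

section Rotation

/-- The isometry `σ` of `V3` that moves the `s`-th `E₈` summand to the `(s + 1)`-st one,
cyclically. -/
def rotate : Module.End Quatᵐᵒᵖ V3 :=
  (LinearMap.funLeft Quatᵐᵒᵖ (Quat × Quat) fun s : Fin 3 => s - 1).prodMap LinearMap.id

lemma rotate_apply (v : V3) : rotate v = (fun s => v.1 (s - 1), v.2) := rfl

lemma rotate_pow_three : rotate ^ 3 = 1 := by
  refine LinearMap.ext fun v => Prod.ext (funext fun s => ?_) rfl
  have hs : s - 1 - 1 - 1 = s := by decide +revert
  simp [pow_succ, rotate_apply, hs]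

lemma ip3_rotate_rotate (x y : V3) : ip3 (rotate x) (rotate y) = ip3 x y := by
  simp only [ip3, rotate_apply]
  congr 2
  exact Equiv.sum_comp (Equiv.subRight (1 : Fin 3))
    fun s => -(star (x.1 s).1 * (y.1 s).1) - star (x.1 s).2 * (y.1 s).2

lemma rotate_rootA : rotate rootA = rootA := rfl

lemma rotate_rootB (s : Fin 3) : rotate (rootB s) = rootB (s + 1) := by
  simp [rotate_apply, rootB, sub_eq_iff_eq_add]

lemma rotate_rootC (s : Fin 3) : rotate (rootC s) = rootC (s + 1) := by
  simp [rotate_apply, rootC, sub_eq_iff_eq_add]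

end Rotation

section SpiderCbrt

/-- The map `τ = φ_a φ_{b₁} φ_{c₁} σ`, a cube root of the spider element. -/
def spiderCbrt : Module.End Quatᵐᵒᵖ V3 :=
  reflEnd rootA qi * reflEnd (rootB 0) qi * reflEnd (rootC 0) qi * rotate

lemma spiderCbrt_pow_three_eq_prod : spiderCbrt ^ 3 =
    reflEnd rootA qi * reflEnd (rootB 0) qi * reflEnd (rootC 0) qi *
    reflEnd rootA qi * reflEnd (rootB 1) qi * reflEnd (rootC 1) qi *
    reflEnd rootA qi * reflEnd (rootB 2) qi * reflEnd (rootC 2) qi := by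
  have rotate_mul (r : V3) (f : Module.End Quatᵐᵒᵖ V3) :
      rotate * (reflEnd r qi * f) = reflEnd (rotate r) qi * (rotate * f) := by
    rw [← mul_assoc, mul_reflEnd_of_isometry ip3_rotate_rotate, mul_assoc]
  have rotate_cubed : rotate * (rotate * rotate) = 1 := by
    rw [← rotate_pow_three, pow_succ', pow_two]
  simp only [spiderCbrt, pow_succ', pow_zero, mul_one, mul_assoc, rotate_mul, rotate_rootA,
    rotate_rootB, rotate_rootC, rotate_cubed]
  rfl

lemma sp_eq_spiderCbrt_pow_three : sp = ⇑(spiderCbrt ^ 3) := by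
  rw [spiderCbrt_pow_three_eq_prod]
  rfl

lemma spiderCbrt_apply (v : V3) : spiderCbrt v =
    reflEnd rootA qi (reflEnd (rootB 0) qi (reflEnd (rootC 0) qi (rotate v))) := rfl

lemma spiderCbrt_rsmul (v : V3) (q : Quat) : spiderCbrt (v <• q) = spiderCbrt v <• q :=
  map_smul spiderCbrt _ v

lemma spiderCbrt_rootA : spiderCbrt rootA = rootB 0 := by
  simp only [spiderCbrt_apply, rotate_rootA, reflEnd_rootC_rootA, reflEnd_rootB_rootA, map_add,
    reflEnd_rootA_rootA, reflEnd_rootA_rootB, add_sub_cancel]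

lemma spiderCbrt_rootB_of_ne {s : Fin 3} (h : 0 ≠ s + 1) :
    spiderCbrt (rootB s) = rootB (s + 1) - rootA <• qi := by
  simp only [spiderCbrt_apply, rotate_rootB, reflEnd_rootC_rootB_of_ne 0 h,
    reflEnd_rootB_rootB_of_ne 0 h, reflEnd_rootA_rootB]

lemma spiderCbrt_rootB_two : spiderCbrt (rootB 2) = -(rootC 0 <• qi) := by
  have h : (2 + 1 : Fin 3) = 0 := rfl
  simp only [spiderCbrt_apply, rotate_rootB, h, reflEnd_rootC_rootB_self, map_sub, map_smul,
    reflEnd_rootB_rootB_self, reflEnd_rootB_rootC_self, reflEnd_rootA_rootB, reflEnd_rootA_rootC,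
    map_add, smul_add, smul_sub]
  abel

lemma spiderCbrt_rootB_zero : spiderCbrt (rootB 0) = rootB 1 - rootA <• qi :=
  spiderCbrt_rootB_of_ne (by decide)

lemma spiderCbrt_rootB_one : spiderCbrt (rootB 1) = rootB 2 - rootA <• qi :=
  spiderCbrt_rootB_of_ne (by decide)

lemma spiderCbrt_rootC_of_ne {s : Fin 3} (h : 0 ≠ s + 1) :
    spiderCbrt (rootC s) = rootC (s + 1) := by
  simp only [spiderCbrt_apply, rotate_rootC, reflEnd_rootC_rootC_of_ne 0 h,
    reflEnd_rootB_rootC_of_ne 0 h, reflEnd_rootA_rootC]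

lemma spiderCbrt_rootC_zero : spiderCbrt (rootC 0) = rootC 1 :=
  spiderCbrt_rootC_of_ne (by decide)

lemma spiderCbrt_rootC_one : spiderCbrt (rootC 1) = rootC 2 :=
  spiderCbrt_rootC_of_ne (by decide)

lemma spiderCbrt_rootC_two :
    spiderCbrt (rootC 2) = rootC 0 <• qi + rootB 0 <• qi + rootA := by
  have h : (2 + 1 : Fin 3) = 0 := rfl
  simp only [spiderCbrt_apply, rotate_rootC, h, reflEnd_rootC_rootC_self, map_smul,
    reflEnd_rootB_rootC_self, reflEnd_rootA_rootB, reflEnd_rootA_rootC, map_add, smul_add, smul_sub,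
    rsmul_qi_rsmul_qi]
  abel

end SpiderCbrt

section Orbit

lemma spiderCbrt_pow_four_rootA :
    (spiderCbrt ^ 4) rootA = -((rootC 0 + rootB 0 + rootB 1) <• qi) - rootA := by
  simp only [pow_succ', pow_zero, mul_one, Module.End.mul_apply, map_sub,
    spiderCbrt_rsmul, spiderCbrt_rootA, spiderCbrt_rootB_zero, spiderCbrt_rootB_one,
    spiderCbrt_rootB_two, smul_add, smul_sub, rsmul_qi_rsmul_qi]
  abel

lemma spiderCbrt_pow_five_rootA :
    (spiderCbrt ^ 5) rootA =
      -((rootC 1 + rootB 1 + rootB 2) <• qi) - rootB 0 - rootA - rootA := by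
  rw [pow_succ', Module.End.mul_apply, spiderCbrt_pow_four_rootA]
  simp only [map_add, map_sub, map_neg, spiderCbrt_rsmul, spiderCbrt_rootA, spiderCbrt_rootB_zero,
    spiderCbrt_rootB_one, spiderCbrt_rootC_zero, smul_add, smul_sub, rsmul_qi_rsmul_qi]
  abel

lemma spiderCbrt_pow_two_apply_pow_five_rootA_add :
    (spiderCbrt ^ 2) ((spiderCbrt ^ 5) rootA + rootA) =
      -(((spiderCbrt ^ 5) rootA + rootA) <• qi) := by
  rw [spiderCbrt_pow_five_rootA]
  simp only [pow_two, Module.End.mul_apply, map_add, map_sub, map_neg, spiderCbrt_rsmul,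
    spiderCbrt_rootA, spiderCbrt_rootB_zero, spiderCbrt_rootB_one, spiderCbrt_rootB_two,
    spiderCbrt_rootC_zero, spiderCbrt_rootC_one, spiderCbrt_rootC_two,
    smul_add, smul_sub, smul_neg, rsmul_qi_rsmul_qi]
  abel

lemma spiderCbrt_pow_four_apply_pow_five_rootA_add :
    (spiderCbrt ^ 4) ((spiderCbrt ^ 5) rootA + rootA) = -((spiderCbrt ^ 5) rootA + rootA) := by
  rw [show 4 = 2 + 2 from rfl, pow_add, Module.End.mul_apply,
    spiderCbrt_pow_two_apply_pow_five_rootA_add, map_neg, map_smul,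
    spiderCbrt_pow_two_apply_pow_five_rootA_add, smul_neg, rsmul_qi_rsmul_qi, neg_neg]

lemma spiderCbrt_pow_five_rootA_add_ne_zero : (spiderCbrt ^ 5) rootA + rootA ≠ 0 := by
  intro h
  rw [spiderCbrt_pow_five_rootA] at h
  have h₁ : ((-((rootC 1 + rootB 1 + rootB 2) <• qi) - rootB 0 - rootA - rootA + rootA).1 1).1
      = 0 := by rw [h]; rfl
  simp [rootA, rootB, rootC, qi_ne_zero] at h₁

lemma spiderCbrt_apply_pow_four_rootA_add_ne_neg :
    spiderCbrt ((spiderCbrt ^ 4) rootA + rootA) ≠ -((spiderCbrt ^ 4) rootA + rootA) := by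
  intro h
  rw [map_add, ← Module.End.mul_apply, ← pow_succ', spiderCbrt_pow_five_rootA,
    spiderCbrt_pow_four_rootA, spiderCbrt_rootA] at h
  have h₁ := congrArg (fun v : V3 => (v.1 1).1) h
  simp [rootA, rootB, rootC, qi_ne_zero] at h₁

end Orbit

section Annihilator

/-- The endomorphism `(τ⁴ + 1)(τ⁵ + 1)`, which annihilates the seven roots `a`, `b_s`, `c_s`. -/
def rootAnnihilator : Module.End Quatᵐᵒᵖ V3 :=
  (spiderCbrt ^ 4 + 1) * (spiderCbrt ^ 5 + 1)

lemma rootAnnihilator_spiderCbrt_apply (v : V3) :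
    rootAnnihilator (spiderCbrt v) = spiderCbrt (rootAnnihilator v) := by
  have h : rootAnnihilator * spiderCbrt = spiderCbrt * rootAnnihilator := by
    rw [rootAnnihilator]
    noncomm_ring
  exact LinearMap.congr_fun h v

lemma rootAnnihilator_rootA : rootAnnihilator rootA = 0 := by
  simp only [rootAnnihilator, Module.End.mul_apply, LinearMap.add_apply, Module.End.one_apply]
  rw [spiderCbrt_pow_four_apply_pow_five_rootA_add, neg_add_cancel]

lemma spiderCbrt_pow_five_apply_pow_four_rootA_add :
    (spiderCbrt ^ 5) ((spiderCbrt ^ 4) rootA + rootA) = -((spiderCbrt ^ 4) rootA + rootA) := by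
  have h : (spiderCbrt ^ 5 + 1) * (spiderCbrt ^ 4 + 1) = rootAnnihilator := by
    rw [rootAnnihilator]
    noncomm_ring
  rw [eq_neg_iff_add_eq_zero]
  exact (LinearMap.congr_fun h rootA).trans rootAnnihilator_rootA

lemma rootAnnihilator_rootB (s : Fin 3) : rootAnnihilator (rootB s) = 0 := by
  have h₀ : rootAnnihilator (rootB 0) = 0 := by
    rw [← spiderCbrt_rootA, rootAnnihilator_spiderCbrt_apply, rootAnnihilator_rootA, map_zero]
  have step {s : Fin 3} (hs : 0 ≠ s + 1) (h : rootAnnihilator (rootB s) = 0) :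
      rootAnnihilator (rootB (s + 1)) = 0 := by
    rw [← sub_add_cancel (rootB (s + 1)) (rootA <• qi), ← spiderCbrt_rootB_of_ne hs, map_add,
      rootAnnihilator_spiderCbrt_apply, h, map_zero, map_smul, rootAnnihilator_rootA, smul_zero,
      add_zero]
  have h₁ := step (s := 0) (by decide) h₀
  have h₂ := step (s := 1) (by decide) h₁
  fin_cases s
  exacts [h₀, h₁, h₂]

lemma rootAnnihilator_rootC (s : Fin 3) : rootAnnihilator (rootC s) = 0 := by
  have h₀ : rootAnnihilator (rootC 0) = 0 := by
    have hC : rootC 0 = spiderCbrt (rootB 2) <• qi := by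
      rw [spiderCbrt_rootB_two, smul_neg, rsmul_qi_rsmul_qi, neg_neg]
    rw [hC, map_smul, rootAnnihilator_spiderCbrt_apply, rootAnnihilator_rootB, map_zero, smul_zero]
  have step {s : Fin 3} (hs : 0 ≠ s + 1) (h : rootAnnihilator (rootC s) = 0) :
      rootAnnihilator (rootC (s + 1)) = 0 := by
    rw [← spiderCbrt_rootC_of_ne hs, rootAnnihilator_spiderCbrt_apply, h, map_zero]
  have h₁ := step (s := 0) (by decide) h₀
  have h₂ := step (s := 1) (by decide) h₁
  fin_cases s
  exacts [h₀, h₁, h₂]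

lemma rootAnnihilator_mul_spiderCbrt_pow_three :
    rootAnnihilator * spiderCbrt ^ 3 = rootAnnihilator := by
  simp only [spiderCbrt_pow_three_eq_prod, ← mul_assoc, mul_reflEnd_of_apply_eq_zero,
    rootAnnihilator_rootA, rootAnnihilator_rootB, rootAnnihilator_rootC]

end Annihilator

section Order

lemma mul_dvd_pow_sub_one {R : Type*} [CommRing R] (x : R) :
    (x ^ 4 + 1) * (x ^ 5 + 1) * (x ^ 3 - 1) ∣ x ^ 120 - 1 := by
  have h₄ : x ^ 4 + 1 ∣ (x ^ 4) ^ 15 + 1 := by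
    simpa only [one_pow] using (show Odd 15 by decide).add_dvd_pow_add_pow (x ^ 4) 1
  have h₅ : x ^ 5 + 1 ∣ (x ^ 5) ^ 3 + 1 := by
    simpa only [one_pow] using (show Odd 3 by decide).add_dvd_pow_add_pow (x ^ 5) 1
  have h₃ : x ^ 3 - 1 ∣ (x ^ 3) ^ 5 - 1 := sub_one_dvd_pow_sub_one _ 5
  have hx : x ^ 120 - 1 =
      ((x ^ 4) ^ 15 + 1) * ((x ^ 5) ^ 3 + 1) * ((x ^ 3) ^ 5 - 1) * (x ^ 30 + 1) := by ring
  rw [hx]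
  exact (mul_dvd_mul (mul_dvd_mul h₄ h₅) h₃).mul_right _

lemma map_pow_eq_one_of_mul_pow_three_eq {A R : Type*} [CommRing A] [Ring R] (f : A →+* R) {x : A}
    (h : (f x ^ 4 + 1) * (f x ^ 5 + 1) * f x ^ 3 = (f x ^ 4 + 1) * (f x ^ 5 + 1)) :
    f x ^ 120 = 1 := by
  obtain ⟨y, hy⟩ := mul_dvd_pow_sub_one x
  have hroot : (f x ^ 4 + 1) * (f x ^ 5 + 1) * (f x ^ 3 - 1) = 0 := by
    rw [mul_sub, h, mul_one, sub_self]
  have hmap := congrArg f hy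
  simp only [map_sub, map_mul, map_add, map_pow, map_one, hroot, zero_mul] at hmap
  exact sub_eq_zero.mp hmap

lemma pow_eq_one_of_mul_pow_three_eq {R : Type*} [Ring R] {t : R}
    (h : (t ^ 4 + 1) * (t ^ 5 + 1) * t ^ 3 = (t ^ 4 + 1) * (t ^ 5 + 1)) : t ^ 120 = 1 := by
  have hX : (aeval t : ℤ[X] →ₐ[ℤ] R).toRingHom X = t := aeval_X t
  rw [← hX] at h ⊢
  exact map_pow_eq_one_of_mul_pow_three_eq _ h

lemma iterate_eq_neg_of_odd {α : Type*} [InvolutiveNeg α] {f : α → α}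
    (hf : ∀ x, f (-x) = -f x) {x : α} (h : f x = -x) {n : ℕ} (hn : Odd n) : f^[n] x = -x := by
  obtain ⟨k, rfl⟩ := hn
  have h₂ : Function.IsFixedPt f^[2] x := by
    rw [Function.IsFixedPt, Function.iterate_succ_apply', Function.iterate_one, h, hf, h, neg_neg]
  rw [add_comm, Function.iterate_add_apply, Function.iterate_mul, (h₂.iterate k).eq,
    Function.iterate_one, h]

lemma spiderCbrt_pow_three_pow_twenty_ne_one : (spiderCbrt ^ 3) ^ 20 ≠ 1 := by
  intro h
  have h₆₀ : (spiderCbrt ^ 4) ^ 15 = 1 := by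
    rw [← pow_mul, ← h, ← pow_mul]
  have hneg := iterate_eq_neg_of_odd (map_neg (spiderCbrt ^ 4))
    spiderCbrt_pow_four_apply_pow_five_rootA_add (n := 15) (by decide)
  rw [← Module.End.pow_apply, h₆₀, Module.End.one_apply] at hneg
  exact spiderCbrt_pow_five_rootA_add_ne_zero (self_eq_neg.mp hneg)

lemma spiderCbrt_pow_three_pow_eight_ne_one : (spiderCbrt ^ 3) ^ 8 ≠ 1 := by
  intro h
  have h₂₅ : (spiderCbrt ^ 5) ^ 5 = spiderCbrt := by
    rw [← pow_mul, show 5 * 5 = 3 * 8 + 1 from rfl, pow_succ, pow_mul, h, one_mul]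
  have hneg := iterate_eq_neg_of_odd (map_neg (spiderCbrt ^ 5))
    spiderCbrt_pow_five_apply_pow_four_rootA_add (n := 5) (by decide)
  rw [← Module.End.pow_apply, h₂₅] at hneg
  exact spiderCbrt_apply_pow_four_rootA_add_ne_neg hneg

lemma orderOf_spiderCbrt_pow_three : orderOf (spiderCbrt ^ 3) = 40 := by
  refine orderOf_eq_of_pow_and_pow_div_prime (by norm_num) ?_ fun q hq hdvd => ?_
  · rw [← pow_mul]
    exact pow_eq_one_of_mul_pow_three_eq rootAnnihilator_mul_spiderCbrt_pow_three
  · obtain h | h := hq.dvd_mul.mp (show q ∣ 2 ^ 3 * 5 from hdvd)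
    · obtain rfl := (Nat.prime_dvd_prime_iff_eq hq Nat.prime_two).mp (hq.dvd_of_dvd_pow h)
      exact spiderCbrt_pow_three_pow_twenty_ne_one
    · obtain rfl := (Nat.prime_dvd_prime_iff_eq hq Nat.prime_five).mp h
      exact spiderCbrt_pow_three_pow_eight_ne_one

end Order

/-- The spider element has order 40. -/
theorem spider_has_order_forty :
    (∀ v, sp^[40] v = v) ∧ ∀ m : ℕ, 0 < m → m < 40 → ∃ v, sp^[m] v ≠ v := by
  have iterate_sp (m : ℕ) (v : V3) : sp^[m] v = ((spiderCbrt ^ 3) ^ m) v := by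
    rw [sp_eq_spiderCbrt_pow_three, Module.End.pow_apply]
  simp only [iterate_sp]
  refine ⟨fun v => ?_, fun m hm hlt => ?_⟩
  · rw [← orderOf_spiderCbrt_pow_three, pow_orderOf_eq_one, Module.End.one_apply]
  · by_contra! h
    have hone : (spiderCbrt ^ 3) ^ m = 1 := LinearMap.ext h
    rw [← orderOf_spiderCbrt_pow_three] at hlt
    exact pow_ne_one_of_lt_orderOf hm.ne' hlt hone
end
end

section
/- The orbit of the root (0; 1, −1) of L = Λ⊕H under the Heisenberg group 𝕋 is exactly the set of all roots of L of the form (λ; 1, ν) with λ ∈ Λ; that is, for every root y = (λ; 1, ν) there exists T ∈ 𝕋 with T((0;1,−1)) = y. -/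
/- Formalization over the ring ℋ of Hurwitz integers inside the real quaternions. -/

noncomputable section
open Quaternion Finset

/-- `ω = (−1+i+j+k)/2`. -/
def omg : Quat := ⟨-1/2, 1/2, 1/2, 1/2⟩

/-- Membership in the ideal `2ℋ`. -/
def In2H (q : Quat) : Prop := ∃ h : Quat, IsHurwitz h ∧ q = 2 * h
/-- Membership in the ideal `(2+2i)ℋ`. -/
def In2p2iH (q : Quat) : Prop := ∃ h : Quat, IsHurwitz h ∧ q = (2 + 2 * qi) * h

/-- The quaternionic Leech lattice `Λ` (coordinates `(v∞,v₀,v₁,v₂,v₃,v₄)`). -/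
def memLeech (v : Fin 6 → Quat) : Prop :=
  (∀ s, IsHurwitz (v s)) ∧
  InPH (v 3 - v 4) ∧ InPH (v 4 - v 5) ∧
  In2H ((v 2 + v 5) * star omg + (v 3 + v 4) * omg) ∧
  In2H ((v 1 + v 2) * omg + (v 3 + v 5) * star omg) ∧
  In2p2iH (-(v 0) * (qi + qj + qk) + v 1 + v 2 + v 3 + v 4 + v 5)

/-- The ambient space of `L = Λ ⊕ H`: vectors `(λ; μ, ν)`. -/
abbrev VL : Type := (Fin 6 → Quat) × Quat × Quat

/-- The form on (the ambient space of) the Leech lattice: `⟨x,y⟩ = −(1/2) Σ x̄ₛ yₛ`. -/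
def ipLeech (x y : Fin 6 → Quat) : Quat := -(2 : Quat)⁻¹ * ∑ s : Fin 6, star (x s) * y s

/-- The ℋ-valued form on `L = Λ ⊕ H`. -/
def ipLL (x y : VL) : Quat :=
  ipLeech x.1 y.1 + star x.2.1 * star qp * y.2.2 + star x.2.2 * qp * y.2.1

/-- Membership in the lattice `L = Λ ⊕ H`. -/
def memLL (v : VL) : Prop := memLeech v.1 ∧ IsHurwitz v.2.1 ∧ IsHurwitz v.2.2

/-- Right scalar multiplication on the ambient space of `Λ ⊕ H`. -/
def rmulL (v : VL) (q : Quat) : VL := (fun s => v.1 s * q, v.2.1 * q, v.2.2 * q)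

/-- The `μ`-reflection in a root `r` : `v ↦ v − r(1−μ)⟨r,v⟩/|r|²`. -/
def reflL (r : VL) (μ : Quat) (v : VL) : VL := v - rmulL r ((1 - μ) * ipLL r v / ipLL r r)

/-- Right scalar multiplication on (the ambient space of) the Leech lattice. -/
def rmulLam (lam : Fin 6 → Quat) (q : Quat) : Fin 6 → Quat := fun s => lam s * q

/-- The translation `T_{λ,z}` :
`(m; μ, ν) ↦ (m + λμ; μ, ν − p̄⁻¹⟨λ,m⟩ + p̄⁻¹(z − ⟨λ,λ⟩/2)μ)`. -/
def Tlz (lam : Fin 6 → Quat) (z : Quat) (v : VL) : VL :=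
  (v.1 + rmulLam lam v.2.1, v.2.1,
   v.2.2 - (star qp)⁻¹ * ipLeech lam v.1 + (star qp)⁻¹ * (z - ipLeech lam lam / 2) * v.2.1)

/-- The imaginary part `Im q = (q − q̄)/2` of a quaternion. -/
def Imq (q : Quat) : Quat := (q - star q) / 2

/-- The Heisenberg group `𝕋`: the group generated by the translations `T_{λ,z}`
(for `λ ∈ Λ` and `z` purely imaginary) which map the lattice `L` to itself. -/
def Heis : Subgroup (Equiv.Perm VL) :=
  Subgroup.closure {g | ∃ lam z, memLeech lam ∧ (z : Quat).re = 0 ∧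
    (∀ v, memLL v → memLL (Tlz lam z v)) ∧ ∀ v, g v = Tlz lam z v}

/-- The root `(0; 1, −1)` of `L = Λ ⊕ H`. -/
def baseRoot : VL := (0, 1, -1)

/-!
A translation `T_{λ,z}` with `z` imaginary preserves the form and fixes the coordinate `μ`, and it
moves `(0; 1, -1)` to `(λ; 1, -1 + p̄⁻¹ (z - ⟨λ,λ⟩/2))`. To reach `(λ; 1, ν)` one is therefore
forced to take `z = p̄ (ν + 1) + ⟨λ,λ⟩/2`, and the norm condition on the root says exactly that
this `z` is imaginary. What remains is that `T_{λ,z}` preserves `L` as soon as `z - ⟨λ,λ⟩/2 ∈ pℋ`,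
which amounts to `⟨Λ,Λ⟩ ⊆ pℋ`. Modulo `pℋ` all of `v₀, …, v₄` agree, say `vₛ = c + p aₛ`, and the
other congruences defining `Λ` say that `a` reduces to a word of the punctured hexacode over
`ℋ/pℋ = 𝔽₄` and determine `v∞` modulo `2pℋ`; so the divisibility of `⟨v,w⟩` by `p` is the
Hermitian self-orthogonality of the hexacode.
-/

/-! ### The hexacode -/

section Hexacode

variable {F : Type*} [CommRing F]

/-- The five-coordinate code over `𝔽₄` obtained from the hexacode by deleting one coordinate;
the deleted coordinate is `∑ s, a s`. The equations are the two congruences modulo `2ℋ` in the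
definition of `Λ`, read on `v₀, …, v₄` (with `ω̄ = ω²`). -/
def puncturedHexacode (ω : F) : Submodule F (Fin 5 → F) where
  carrier := {a | (a 1 + a 4) * ω ^ 2 + (a 2 + a 3) * ω = 0 ∧
    (a 0 + a 1) * ω + (a 2 + a 4) * ω ^ 2 = 0}
  zero_mem' := by simp
  add_mem' := by
    rintro a b ⟨left_eq_a, right_eq_a⟩ ⟨left_eq_b, right_eq_b⟩
    constructor <;> simp only [Pi.add_apply]
    · linear_combination left_eq_a + left_eq_b
    · linear_combination right_eq_a + right_eq_b
  smul_mem' := by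
    rintro t a ⟨left_eq, right_eq⟩
    constructor <;> simp only [Pi.smul_apply, smul_eq_mul]
    · linear_combination t * left_eq
    · linear_combination t * right_eq

/-- Hermitian self-orthogonality of the hexacode: since `ω ↦ ω²` is the conjugation of `𝔽₄`, the
conjugate of a word of `puncturedHexacode ω` lies in `puncturedHexacode (ω ^ 2)`. -/
theorem sum_mul_eq_sum_mul_sum_of_mem_puncturedHexacode (h2 : (2 : F) = 0) {ω : F}
    (hω : 1 + ω + ω ^ 2 = 0) {a b : Fin 5 → F} (ha : a ∈ puncturedHexacode (ω ^ 2))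
    (hb : b ∈ puncturedHexacode ω) : ∑ s, a s * b s = (∑ s, a s) * ∑ s, b s := by
  obtain ⟨ha₁, ha₂⟩ := ha
  obtain ⟨hb₁, hb₂⟩ := hb
  have ha_one : a 1 = a 4 + (a 2 + a 3) * ω := by grind
  have ha_zero : a 0 = a 1 + (a 2 + a 4) * ω ^ 2 := by grind
  have hb_one : b 1 = b 4 + (b 2 + b 3) * ω ^ 2 := by grind
  have hb_zero : b 0 = b 1 + (b 2 + b 4) * ω := by grind
  rw [Fin.sum_univ_five, Fin.sum_univ_five, Fin.sum_univ_five, ha_zero, hb_zero, ha_one, hb_one]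
  grind

end Hexacode

/-! ### The ring of Hurwitz integers -/

@[simp]
theorem qi_components : qi.re = 0 ∧ qi.imI = 1 ∧ qi.imJ = 0 ∧ qi.imK = 0 :=
  ⟨rfl, rfl, rfl, rfl⟩

@[simp]
theorem qj_components : qj.re = 0 ∧ qj.imI = 0 ∧ qj.imJ = 1 ∧ qj.imK = 0 :=
  ⟨rfl, rfl, rfl, rfl⟩

@[simp]
theorem qk_components : qk.re = 0 ∧ qk.imI = 0 ∧ qk.imJ = 0 ∧ qk.imK = 1 :=
  ⟨rfl, rfl, rfl, rfl⟩

@[simp]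
theorem omg_components :
    omg.re = -1 / 2 ∧ omg.imI = 1 / 2 ∧ omg.imJ = 1 / 2 ∧ omg.imK = 1 / 2 :=
  ⟨rfl, rfl, rfl, rfl⟩

@[simp]
theorem quat_two_components :
    (2 : Quat).re = 2 ∧ (2 : Quat).imI = 0 ∧ (2 : Quat).imJ = 0 ∧ (2 : Quat).imK = 0 :=
  ⟨rfl, rfl, rfl, rfl⟩

instance inst_s19 : CharZero Quat :=
  charZero_of_injective_algebraMap (algebraMap ℝ Quat).injective

theorem isHurwitz_iff_exists_components {q : Quat} :
    IsHurwitz q ↔ ∃ a b c w : ℤ,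
      q.re = a + w / 2 ∧ q.imI = b + w / 2 ∧ q.imJ = c + w / 2 ∧ q.imK = w / 2 := by
  constructor
  · rintro ⟨a, b, c, d, hab, hbc, hcd, rfl⟩
    obtain ⟨a, rfl⟩ : ∃ t, a = 2 * t + d := ⟨(a - d) / 2, by lia⟩
    obtain ⟨b, rfl⟩ : ∃ t, b = 2 * t + d := ⟨(b - d) / 2, by lia⟩
    obtain ⟨c, rfl⟩ : ∃ t, c = 2 * t + d := ⟨(c - d) / 2, by lia⟩
    refine ⟨a, b, c, d, ?_, ?_, ?_, rfl⟩ <;> push_cast <;> ring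
  · rintro ⟨a, b, c, w, hre, hi, hj, hk⟩
    refine ⟨2 * a + w, 2 * b + w, 2 * c + w, w, by lia, by lia, by lia, ?_⟩
    apply Quaternion.ext <;> simp only [hre, hi, hj, hk] <;> push_cast <;> ring

theorem isHurwitz_qi : IsHurwitz qi :=
  isHurwitz_iff_exists_components.2 ⟨0, 1, 0, 0, by simp⟩

theorem isHurwitz_omg : IsHurwitz omg :=
  isHurwitz_iff_exists_components.2 ⟨-1, 0, 0, 1, by simp; norm_num⟩

theorem IsHurwitz.add {x y : Quat} (hx : IsHurwitz x) (hy : IsHurwitz y) : IsHurwitz (x + y) := by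
  obtain ⟨a, b, c, w, hre, hi, hj, hk⟩ := isHurwitz_iff_exists_components.1 hx
  obtain ⟨a', b', c', w', hre', hi', hj', hk'⟩ := isHurwitz_iff_exists_components.1 hy
  refine isHurwitz_iff_exists_components.2 ⟨a + a', b + b', c + c', w + w', ?_, ?_, ?_, ?_⟩ <;>
    simp [*] <;> ring

theorem IsHurwitz.star {x : Quat} (hx : IsHurwitz x) : IsHurwitz (star x) := by
  obtain ⟨a, b, c, w, hre, hi, hj, hk⟩ := isHurwitz_iff_exists_components.1 hx
  refine isHurwitz_iff_exists_components.2 ⟨a + w, -b, -c, -w, ?_, ?_, ?_, ?_⟩ <;>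
    simp [*] <;> ring

theorem IsHurwitz.mul {x y : Quat} (hx : IsHurwitz x) (hy : IsHurwitz y) : IsHurwitz (x * y) := by
  obtain ⟨a, b, c, w, hre, hi, hj, hk⟩ := isHurwitz_iff_exists_components.1 hx
  obtain ⟨a', b', c', w', hre', hi', hj', hk'⟩ := isHurwitz_iff_exists_components.1 hy
  refine isHurwitz_iff_exists_components.2
    ⟨a * a' - b * b' - c * c' - b * w' - w * c' - w * w' - b * c' + c * b',
      a * b' + b * a' + c * w' - w * c' - b * c' + c * b' + w * b',
      a * c' + c * a' - b * w' + w * b' + c * b' - b * c' + c * w',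
      a * w' + w * a' + w * w' + 2 * (b * c') + b * w' + w * c' - 2 * (c * b') - c * w' - w * b',
      ?_, ?_, ?_, ?_⟩ <;> simp [*] <;> ring

theorem IsHurwitz.neg {x : Quat} (hx : IsHurwitz x) : IsHurwitz (-x) := by
  obtain ⟨a, b, c, w, hre, hi, hj, hk⟩ := isHurwitz_iff_exists_components.1 hx
  refine isHurwitz_iff_exists_components.2 ⟨-a, -b, -c, -w, ?_, ?_, ?_, ?_⟩ <;>
    simp [*] <;> ring

/-- The ring `ℋ` of Hurwitz integers, as a subring of `ℍ`. -/
def hurwitzSubring : Subring Quat where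
  carrier := {q | IsHurwitz q}
  zero_mem' := isHurwitz_iff_exists_components.2 ⟨0, 0, 0, 0, by simp⟩
  one_mem' := isHurwitz_iff_exists_components.2 ⟨1, 0, 0, 0, by simp⟩
  add_mem' := IsHurwitz.add
  neg_mem' := IsHurwitz.neg
  mul_mem' := IsHurwitz.mul

/-- The type of Hurwitz integers. -/
abbrev Hurwitz : Type := hurwitzSubring

namespace Hurwitz

instance : StarRing Hurwitz where
  star x := ⟨star (x : Quat), x.2.star⟩
  star_involutive x := Subtype.ext (star_star (x : Quat))
  star_mul x y := Subtype.ext (star_mul (x : Quat) y)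
  star_add x y := Subtype.ext (star_add (x : Quat) y)

@[simp]
theorem coe_star (x : Hurwitz) : ((star x : Hurwitz) : Quat) = star (x : Quat) := rfl

@[simp]
theorem coe_ofNat (n : ℕ) [n.AtLeastTwo] : ((ofNat(n) : Hurwitz) : Quat) = ofNat(n) := rfl

/-- The Hurwitz integer `i`. -/
def i : Hurwitz := ⟨qi, isHurwitz_qi⟩

/-- The Hurwitz integer `p = 1 - i`, of norm `2`. -/
def p : Hurwitz := 1 - i

/-- The Hurwitz integer `ω`, a primitive cube root of unity. -/
def ω : Hurwitz := ⟨omg, isHurwitz_omg⟩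

/-- The Hurwitz integer `θ = i + j + k`, written in terms of `ω`. -/
def θ : Hurwitz := 1 + 2 * ω

@[simp] theorem coe_i : (i : Quat) = qi := rfl

@[simp] theorem coe_p : (p : Quat) = qp := rfl

@[simp] theorem coe_ω : (ω : Quat) = omg := rfl

theorem coe_θ : (θ : Quat) = qi + qj + qk := by
  ext <;> simp [θ]
  norm_num

theorem i_mul_i : i * i = -1 :=
  Subtype.ext (by ext <;> simp)

theorem star_i : star i = -i :=
  Subtype.ext (by ext <;> simp)

theorem star_ω : star ω = -1 - ω :=
  Subtype.ext (by ext <;> simp; norm_num)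

theorem ω_mul_ω : ω * ω = -1 - ω :=
  Subtype.ext (by ext <;> simp <;> norm_num)

theorem star_p : star p = p * i := by
  rw [p, star_sub, star_one, star_i]; linear_combination (norm := noncomm_ring) i_mul_i

theorem star_p_mul_p : star p * p = 2 := by
  rw [star_p, p]; linear_combination (norm := noncomm_ring) (i - 2) * i_mul_i

theorem p_mul_p_mul_i : p * (p * i) = 2 := by
  rw [p]; linear_combination (norm := noncomm_ring) (i - 2) * i_mul_i

theorem θ_mul_θ : θ * θ = -3 := by
  calc θ * θ = 1 + 4 * (ω + ω * ω) := by rw [θ]; noncomm_ring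
    _ = -3 := by rw [ω_mul_ω, add_sub_cancel]; norm_num

theorem star_θ : star θ = -θ := by
  rw [θ, star_add, star_mul, star_ω, star_one, star_ofNat]; noncomm_ring

theorem star_θ_mul_θ : star θ * θ = 3 := by
  rw [star_θ, neg_mul, θ_mul_θ, neg_neg]

/-! ### The two-sided ideal `pℋ` and its residue ring -/

theorem inPH_coe_iff {x : Hurwitz} : InPH (x : Quat) ↔ p ∣ x := by
  constructor
  · rintro ⟨h, hh, hx⟩
    exact ⟨⟨h, hh⟩, Subtype.ext hx⟩
  · rintro ⟨h, rfl⟩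
    exact ⟨h, h.2, rfl⟩

theorem in2H_coe_iff {x : Hurwitz} : In2H (x : Quat) ↔ 2 ∣ x := by
  constructor
  · rintro ⟨h, hh, hx⟩
    exact ⟨⟨h, hh⟩, Subtype.ext hx⟩
  · rintro ⟨h, rfl⟩
    exact ⟨h, h.2, rfl⟩

theorem isUnit_i : IsUnit i :=
  ⟨⟨i, -i, by rw [mul_neg, i_mul_i, neg_neg], by rw [neg_mul, i_mul_i, neg_neg]⟩, rfl⟩

theorem in2p2iH_coe_iff {x : Hurwitz} : In2p2iH (x : Quat) ↔ 2 * p ∣ x := by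
  have associated : 2 + 2 * i = 2 * p * i := by
    rw [mul_assoc, ← star_p, p, star_sub, star_one, star_i, sub_neg_eq_add, mul_add, mul_one]
  rw [← isUnit_i.mul_right_dvd, ← associated]
  constructor
  · rintro ⟨h, hh, hx⟩
    exact ⟨⟨h, hh⟩, Subtype.ext hx⟩
  · rintro ⟨h, rfl⟩
    exact ⟨h, h.2, rfl⟩

theorem p_ne_zero : p ≠ 0 := fun h => by
  simpa [qp] using congrArg (fun x : Hurwitz => (x : Quat).re) h

theorem two_dvd_p_mul_iff {x : Hurwitz} : 2 ∣ p * x ↔ p ∣ x := by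
  rw [← p_mul_p_mul_i, mul_dvd_mul_iff_left p_ne_zero, isUnit_i.mul_right_dvd]

theorem p_dvd_two : p ∣ 2 := ⟨p * i, p_mul_p_mul_i.symm⟩

/-- `pℋ` is the `D₄` lattice. -/
theorem p_dvd_iff_exists_components {x : Hurwitz} :
    p ∣ x ↔ ∃ a b c d : ℤ, Even (a + b + c + d) ∧ (x : Quat).re = a ∧ (x : Quat).imI = b ∧
      (x : Quat).imJ = c ∧ (x : Quat).imK = d := by
  constructor
  · rintro ⟨y, rfl⟩
    obtain ⟨a, b, c, w, hre, hi, hj, hk⟩ := isHurwitz_iff_exists_components.1 y.2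
    refine ⟨a + b + w, b - a, c + w, -c, ⟨b + w, by ring⟩, ?_⟩
    simp [qp, hre, hi, hj, hk]
    ring_nf
    simp
  · rintro ⟨a, b, c, d, ⟨t, ht⟩, hre, hi, hj, hk⟩
    obtain rfl : a = 2 * t - b - c - d := by lia
    obtain ⟨y, yre, yi, yj, yk⟩ : ∃ y : Quat, y.re = (t - b - c - d : ℤ) + (c + d : ℤ) / 2 ∧
        y.imI = (t - c - d : ℤ) + (c + d : ℤ) / 2 ∧ y.imJ = (-d : ℤ) + (c + d : ℤ) / 2 ∧
        y.imK = (c + d : ℤ) / 2 := ⟨⟨_, _, _, _⟩, rfl, rfl, rfl, rfl⟩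
    have hy : IsHurwitz y := isHurwitz_iff_exists_components.2 ⟨_, _, _, _, yre, yi, yj, yk⟩
    refine ⟨⟨y, hy⟩, Subtype.ext ?_⟩
    ext <;> simp [qp, *] <;> ring

theorem p_dvd_star {x : Hurwitz} (h : p ∣ x) : p ∣ star x := by
  obtain ⟨a, b, c, d, ⟨t, ht⟩, hre, hi, hj, hk⟩ := p_dvd_iff_exists_components.1 h
  exact p_dvd_iff_exists_components.2
    ⟨a, -b, -c, -d, ⟨a - t, by lia⟩, by simp [hre, hi, hj, hk]⟩

theorem p_dvd_mul_left {x : Hurwitz} (h : p ∣ x) (y : Hurwitz) : p ∣ y * x := by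
  simpa using p_dvd_star ((p_dvd_star h).mul_right (star y))

theorem p_dvd_commutator (x y : Hurwitz) : p ∣ x * y - y * x := by
  obtain ⟨a, b, c, w, hre, hi, hj, hk⟩ := isHurwitz_iff_exists_components.1 x.2
  obtain ⟨a', b', c', w', hre', hi', hj', hk'⟩ := isHurwitz_iff_exists_components.1 y.2
  refine p_dvd_iff_exists_components.2 ⟨0, c * w' - w * c', w * b' - b * w',
    2 * (b * c' - c * b') + b * w' + w * c' - c * w' - w * b',
    ⟨b * c' - c * b', by ring⟩, ?_, ?_, ?_, ?_⟩ <;> simp [*] <;> ring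

theorem two_mul_p_dvd_two_mul_iff {x : Hurwitz} : 2 * p ∣ 2 * x ↔ p ∣ x :=
  mul_dvd_mul_iff_left two_ne_zero

theorem two_mul_p_dvd_commutator_θ (x : Hurwitz) : 2 * p ∣ θ * x - x * θ := by
  have : θ * x - x * θ = 2 * (ω * x - x * ω) := by rw [θ]; noncomm_ring
  rw [this, two_mul_p_dvd_two_mul_iff]
  exact p_dvd_commutator ω x

theorem two_mul_p_dvd_four_mul (x : Hurwitz) : 2 * p ∣ 4 * x := by
  have : 4 * x = 2 * (2 * x) := by noncomm_ring
  rw [this, two_mul_p_dvd_two_mul_iff]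
  exact p_dvd_two.mul_right x

/-- The two-sided ideal `pℋ`. -/
def pIdeal : Ideal Hurwitz where
  carrier := {x | p ∣ x}
  zero_mem' := dvd_zero p
  add_mem' := dvd_add
  smul_mem' y _ hx := p_dvd_mul_left hx y

instance : pIdeal.IsTwoSided where
  mul_mem_of_left y hx := Dvd.dvd.mul_right hx y

instance : CommRing (Hurwitz ⧸ pIdeal) where
  mul_comm := by
    rintro ⟨x⟩ ⟨y⟩
    exact Ideal.Quotient.eq.2 (p_dvd_commutator x y)

/-- Reduction of Hurwitz integers modulo `pℋ`; the residue ring is the field with four elements. -/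
def residue : Hurwitz →+* Hurwitz ⧸ pIdeal := Ideal.Quotient.mk pIdeal

theorem residue_eq_zero_iff {x : Hurwitz} : residue x = 0 ↔ p ∣ x :=
  Ideal.Quotient.eq_zero_iff_mem

theorem residueRing_two_eq_zero : (2 : Hurwitz ⧸ pIdeal) = 0 := residue_eq_zero_iff.2 p_dvd_two

theorem one_add_residue_ω_add_sq : 1 + residue ω + residue ω ^ 2 = 0 := by
  rw [sq, ← map_mul, ω_mul_ω]; simp

theorem residue_eq_iff {x y : Hurwitz} : residue x = residue y ↔ p ∣ x - y :=
  Ideal.Quotient.eq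

theorem residue_p : residue p = 0 := residue_eq_zero_iff.2 dvd_rfl

theorem residue_star_ω : residue (star ω) = residue ω ^ 2 := by
  rw [star_ω, map_sub, map_neg, map_one]
  linear_combination -one_add_residue_ω_add_sq

/-! ### Parametrization of the Leech lattice -/

theorem two_mul_p_dvd_neg_mul_θ_add_iff {x y : Hurwitz} :
    2 * p ∣ -x * θ + y ↔ 2 * p ∣ x - θ * y := by
  constructor <;> intro h
  · have : x - θ * y = 4 * x - (-x * θ + y) * θ - (θ * y - y * θ) := by
      linear_combination (norm := noncomm_ring) -(x * θ_mul_θ)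
    rw [this]
    exact ((two_mul_p_dvd_four_mul x).sub (h.mul_right θ)).sub (two_mul_p_dvd_commutator_θ y)
  · have : -x * θ + y = 4 * y + (θ * (θ * y) - θ * y * θ) - (x - θ * y) * θ := by
      linear_combination (norm := noncomm_ring) -(θ_mul_θ * y)
    rw [this]
    exact ((two_mul_p_dvd_four_mul y).add (two_mul_p_dvd_commutator_θ _)).sub (h.mul_right θ)

theorem two_dvd_affine_iff (c x y z w u v : Hurwitz) :
    2 ∣ (c + p * x + (c + p * y)) * u + (c + p * z + (c + p * w)) * v ↔
      p ∣ (x + y) * u + (z + w) * v := by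
  have : (c + p * x + (c + p * y)) * u + (c + p * z + (c + p * w)) * v =
      2 * (c * (u + v)) + p * ((x + y) * u + (z + w) * v) := by noncomm_ring
  rw [this, dvd_add_right (dvd_mul_right 2 _), two_dvd_p_mul_iff]

theorem memLeech_coe_iff {x : Fin 6 → Hurwitz} :
    memLeech (fun s => (x s : Quat)) ↔ p ∣ x 3 - x 4 ∧ p ∣ x 4 - x 5 ∧
      2 ∣ (x 2 + x 5) * star ω + (x 3 + x 4) * ω ∧
      2 ∣ (x 1 + x 2) * ω + (x 3 + x 5) * star ω ∧
      2 * p ∣ x 0 - θ * (x 1 + x 2 + x 3 + x 4 + x 5) := by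
  rw [← two_mul_p_dvd_neg_mul_θ_add_iff, ← inPH_coe_iff, ← inPH_coe_iff, ← in2H_coe_iff,
    ← in2H_coe_iff, ← in2p2iH_coe_iff]
  push_cast
  rw [coe_θ]
  simp only [coe_star, coe_ω, ← add_assoc]
  exact and_iff_right fun s => (x s).2

theorem residue_mem_puncturedHexacode_iff {a : Fin 5 → Hurwitz} :
    (fun s => residue (a s)) ∈ puncturedHexacode (residue ω) ↔
      p ∣ (a 1 + a 4) * star ω + (a 2 + a 3) * ω ∧
      p ∣ (a 0 + a 1) * ω + (a 2 + a 4) * star ω := by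
  simp only [← residue_eq_zero_iff, map_add, map_mul, residue_star_ω]
  rfl

theorem residue_star_mem_puncturedHexacode {a : Fin 5 → Hurwitz}
    (ha : (fun s => residue (a s)) ∈ puncturedHexacode (residue ω)) :
    (fun s => residue (star (a s))) ∈ puncturedHexacode (residue ω ^ 2) := by
  obtain ⟨h, h'⟩ := residue_mem_puncturedHexacode_iff.1 ha
  have hstar := residue_eq_zero_iff.2 (p_dvd_star h)
  have hstar' := residue_eq_zero_iff.2 (p_dvd_star h')
  simp only [star_add, star_mul, star_star, map_add, map_mul, residue_star_ω] at hstar hstar'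
  have ω_pow_four : (residue ω ^ 2) ^ 2 = residue ω := by
    linear_combination (residue ω ^ 2 - residue ω) * one_add_residue_ω_add_sq
  constructor <;> rw [ω_pow_four]
  · linear_combination hstar
  · linear_combination hstar'

theorem p_dvd_sub_of_leech_congruences {x : Fin 6 → Hurwitz} (h₃₄ : p ∣ x 3 - x 4)
    (h₄₅ : p ∣ x 4 - x 5) (hω : 2 ∣ (x 2 + x 5) * star ω + (x 3 + x 4) * ω)
    (hω' : 2 ∣ (x 1 + x 2) * ω + (x 3 + x 5) * star ω) (s : Fin 5) : p ∣ x s.succ - x 5 := by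
  have h2 := residueRing_two_eq_zero
  have hω_sq := one_add_residue_ω_add_sq
  rw [← residue_eq_iff] at h₃₄ h₄₅
  replace hω := residue_eq_zero_iff.2 (p_dvd_two.trans hω)
  replace hω' := residue_eq_zero_iff.2 (p_dvd_two.trans hω')
  simp only [map_add, map_mul, residue_star_ω] at hω hω'
  have h₂₅ : residue (x 2) = residue (x 5) := by grind
  have h₁₅ : residue (x 1) = residue (x 5) := by grind
  rw [← residue_eq_iff]
  fin_cases s
  exacts [h₁₅, h₂₅, h₃₄.trans h₄₅, h₄₅, rfl]

/-- The vector with `v∞ = θ ∑ vₛ + 2pg` and `vₛ = c + p aₛ` for `s = 0, …, 4`. It lies in `Λ` when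
`a` reduces modulo `p` to a word of the hexacode, and every vector of `Λ` has this form. -/
def leechVec (c : Hurwitz) (a : Fin 5 → Hurwitz) (g : Hurwitz) : Fin 6 → Hurwitz :=
  Fin.cons (θ * ∑ s, (c + p * a s) + 2 * p * g) fun s => c + p * a s

theorem memLeech_iff {v : Fin 6 → Quat} :
    memLeech v ↔ ∃ c a g, (fun s => residue (a s)) ∈ puncturedHexacode (residue ω) ∧
      v = fun s => (leechVec c a g s : Quat) := by
  constructor
  · intro hv
    obtain ⟨x, rfl⟩ : ∃ x : Fin 6 → Hurwitz, v = fun s => (x s : Quat) :=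
      ⟨fun s => ⟨v s, hv.1 s⟩, rfl⟩
    obtain ⟨h₃₄, h₄₅, hω, hω', g, hg⟩ := memLeech_coe_iff.1 hv
    choose a ha using p_dvd_sub_of_leech_congruences h₃₄ h₄₅ hω hω'
    obtain ⟨c, hc⟩ : ∃ c, c = x 5 := ⟨_, rfl⟩
    have hx (s : Fin 5) : x s.succ = c + p * a s := by rw [hc, ← ha, add_sub_cancel]
    have hx_zero : x 0 = θ * ∑ s : Fin 5, x s.succ + 2 * p * g := by
      rw [← hg, Fin.sum_univ_five]
      exact (add_sub_cancel _ _).symm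
    have hx_eq : x = leechVec c a g :=
      funext <| Fin.cases (hx_zero.trans <| by simp only [hx]; rfl) hx
    refine ⟨c, a, g, residue_mem_puncturedHexacode_iff.2 ⟨?_, ?_⟩, by rw [hx_eq]⟩
    · rw [← two_dvd_affine_iff c, ← hx 1, ← hx 4, ← hx 2, ← hx 3]
      exact hω
    · rw [← two_dvd_affine_iff c, ← hx 0, ← hx 1, ← hx 2, ← hx 4]
      exact hω'
  · rintro ⟨c, a, g, ha, rfl⟩
    obtain ⟨hω, hω'⟩ := residue_mem_puncturedHexacode_iff.1 ha
    refine memLeech_coe_iff.2 ⟨⟨a 2 - a 3, ?_⟩, ⟨a 3 - a 4, ?_⟩,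
      (two_dvd_affine_iff c ..).2 hω, (two_dvd_affine_iff c ..).2 hω', ⟨g, ?_⟩⟩
    · change c + p * a 2 - (c + p * a 3) = _
      noncomm_ring
    · change c + p * a 3 - (c + p * a 4) = _
      noncomm_ring
    · rw [leechVec, Fin.sum_univ_five, Fin.cons_zero]
      exact add_sub_cancel_left _ _

theorem leechVec_add (c d : Hurwitz) (a b : Fin 5 → Hurwitz) (g h : Hurwitz) :
    leechVec c a g + leechVec d b h = leechVec (c + d) (a + b) (g + h) := by
  have coord (s : Fin 5) : c + d + p * (a + b) s = (c + p * a s) + (d + p * b s) := by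
    rw [Pi.add_apply]; noncomm_ring
  refine funext <| Fin.cases ?_ fun s => (coord s).symm
  simp only [leechVec, Pi.add_apply (f := Fin.cons _ _), Fin.cons_zero, coord, sum_add_distrib,
    mul_add]
  abel

theorem leechVec_mul (c : Hurwitz) (a : Fin 5 → Hurwitz) (g q : Hurwitz) :
    (fun s => leechVec c a g s * q) = leechVec (c * q) (fun s => a s * q) (g * q) := by
  refine funext <| Fin.cases ?_ fun s => ?_
  · simp only [leechVec, Fin.cons_zero, add_mul, mul_assoc, sum_mul]
  · simp only [leechVec, Fin.cons_succ, add_mul, mul_assoc]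

theorem star_affine_mul_affine (c d x y : Hurwitz) :
    star (c + p * x) * (d + p * y) =
      star c * d + star c * p * y + star x * star p * d + 2 * (star x * y) := by
  rw [star_add, star_mul]
  linear_combination (norm := noncomm_ring) star x * star_p_mul_p * y

theorem sum_star_affine_mul_affine (c d : Hurwitz) (a b : Fin 5 → Hurwitz) :
    ∑ s, star (c + p * a s) * (d + p * b s) = 5 • (star c * d) + star c * p * ∑ s, b s +
      (∑ s, star (a s)) * star p * d + 2 * ∑ s, star (a s) * b s := by
  simp only [star_affine_mul_affine, sum_add_distrib, ← mul_sum, ← sum_mul, sum_const, card_univ,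
    Fintype.card_fin, mul_smul_comm]

theorem star_sum_affine_mul_sum_affine (c d : Hurwitz) (a b : Fin 5 → Hurwitz) :
    star (∑ s, (c + p * a s)) * ∑ s, (d + p * b s) =
      25 • (star c * d) + 5 • (star c * p * ∑ s, b s) + 5 • ((∑ s, star (a s)) * star p * d) +
        2 * ((∑ s, star (a s)) * ∑ s, b s) := by
  have sum_affine (c : Hurwitz) (a : Fin 5 → Hurwitz) :
      ∑ s, (c + p * a s) = 5 • c + p * ∑ s, a s := by
    simp only [sum_add_distrib, ← mul_sum, sum_const, card_univ, Fintype.card_fin]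
  rw [sum_affine, sum_affine, star_affine_mul_affine, star_sum, star_nsmul]
  noncomm_ring

theorem star_add_two_mul_p_mul (x y g h : Hurwitz) :
    star (θ * x + 2 * p * g) * (θ * y + 2 * p * h) = 3 * (star x * y) +
      2 * (star x * star θ * p * h + star g * star p * θ * y + 2 * (star g * star p * p * h)) := by
  have star_two : star (2 : Hurwitz) = 2 := star_ofNat 2
  simp only [star_add, star_mul, star_two]
  linear_combination (norm := noncomm_ring) star x * star_θ_mul_θ * y

theorem two_mul_p_dvd_sum_star_leechVec_mul_leechVec {c d g h : Hurwitz} {a b : Fin 5 → Hurwitz}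
    (ha : (fun s => residue (a s)) ∈ puncturedHexacode (residue ω))
    (hb : (fun s => residue (b s)) ∈ puncturedHexacode (residue ω)) :
    2 * p ∣ ∑ s, star (leechVec c a g s) * leechVec d b h s := by
  have orthogonal := sum_mul_eq_sum_mul_sum_of_mem_puncturedHexacode residueRing_two_eq_zero
    one_add_residue_ω_add_sq (residue_star_mem_puncturedHexacode ha) hb
  obtain ⟨x, hx⟩ : ∃ x, x = ∑ s, (c + p * a s) := ⟨_, rfl⟩
  obtain ⟨y, hy⟩ : ∃ y, y = ∑ s, (d + p * b s) := ⟨_, rfl⟩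
  have sum_eq : ∑ s, star (leechVec c a g s) * leechVec d b h s =
      2 * (40 • (star c * d) + 8 • (star c * p * ∑ s, b s) +
        8 • ((∑ s, star (a s)) * star p * d) + 3 • ((∑ s, star (a s)) * ∑ s, b s) +
        ∑ s, star (a s) * b s + (star x * star θ * p * h + star g * star p * θ * y +
        2 * (star g * star p * p * h))) := by
    rw [Fin.sum_univ_succ]
    simp only [leechVec, Fin.cons_zero, Fin.cons_succ]
    rw [sum_star_affine_mul_affine, star_add_two_mul_p_mul, star_sum_affine_mul_sum_affine,
      ← hx, ← hy]
    noncomm_ring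
  rw [sum_eq, two_mul_p_dvd_two_mul_iff, ← residue_eq_zero_iff]
  simp only [map_add, map_mul, map_nsmul, map_sum, residue_p, star_p]
  linear_combination orthogonal + (20 * (residue (star c) * residue d) +
    2 * ((∑ s, residue (star (a s))) * ∑ s, residue (b s))) * residueRing_two_eq_zero

end Hurwitz

theorem memLeech_zero : memLeech 0 :=
  (Hurwitz.memLeech_coe_iff (x := 0)).2 (by simp)

theorem memLeech.add {v w : Fin 6 → Quat} (hv : memLeech v) (hw : memLeech w) :
    memLeech (v + w) := by
  obtain ⟨c, a, g, ha, rfl⟩ := Hurwitz.memLeech_iff.1 hv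
  obtain ⟨d, b, h, hb, rfl⟩ := Hurwitz.memLeech_iff.1 hw
  refine Hurwitz.memLeech_iff.2 ⟨c + d, a + b, g + h, ?_, ?_⟩
  · convert add_mem ha hb
    simp
  · rw [← Hurwitz.leechVec_add]
    rfl

theorem memLeech.rmul {v : Fin 6 → Quat} (hv : memLeech v) {q : Quat} (hq : IsHurwitz q) :
    memLeech (rmulLam v q) := by
  obtain ⟨c, a, g, ha, rfl⟩ := Hurwitz.memLeech_iff.1 hv
  lift q to Hurwitz using hq
  refine Hurwitz.memLeech_iff.2 ⟨c * q, fun s => a s * q, g * q, ?_, ?_⟩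
  · convert Submodule.smul_mem _ (Hurwitz.residue q) ha
    simp [mul_comm]
  · rw [← Hurwitz.leechVec_mul]
    rfl

theorem memLeech.neg {v : Fin 6 → Quat} (hv : memLeech v) : memLeech (-v) := by
  convert hv.rmul (Subring.one_mem hurwitzSubring : IsHurwitz 1).neg
  ext1 s
  simp [rmulLam]

theorem memLeech.inPH_ipLeech {v w : Fin 6 → Quat} (hv : memLeech v) (hw : memLeech w) :
    InPH (ipLeech v w) := by
  obtain ⟨c, a, g, ha, rfl⟩ := Hurwitz.memLeech_iff.1 hv
  obtain ⟨d, b, h, hb, rfl⟩ := Hurwitz.memLeech_iff.1 hw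
  obtain ⟨k, hk⟩ := Hurwitz.two_mul_p_dvd_sum_star_leechVec_mul_leechVec (c := c) (d := d)
    (g := g) (h := h) ha hb
  have sum_eq := congrArg (Subtype.val : Hurwitz → Quat) hk
  push_cast at sum_eq
  refine ⟨-k, k.2.neg, ?_⟩
  simp only [Hurwitz.coe_star, Hurwitz.coe_ofNat, Hurwitz.coe_p] at sum_eq
  rw [ipLeech, sum_eq, neg_mul, mul_assoc, inv_mul_cancel_left₀ two_ne_zero, mul_neg]

/-! ### Heisenberg translations -/

theorem div_two_eq_smul (x : Quat) : x / 2 = (1 / 2 : ℝ) • x := by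
  rw [div_eq_iff two_ne_zero, mul_two, ← add_smul, add_halves, one_smul]

theorem star_qp_ne_zero : star qp ≠ 0 := fun h => by
  simpa [qp] using congrArg (fun q : Quat => q.re) h

theorem star_qp_eq : star qp = qp * qi :=
  congrArg (Subtype.val : Hurwitz → Quat) Hurwitz.star_p

theorem inPH_iff_isHurwitz {x : Quat} : InPH x ↔ IsHurwitz ((star qp)⁻¹ * x) := by
  constructor
  · rintro ⟨h, hh, rfl⟩
    have : qp * h = star qp * (-qi * h) := by
      have qi_mul_qi : qi * qi = -1 := congrArg Subtype.val Hurwitz.i_mul_i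
      rw [star_qp_eq]
      linear_combination (norm := noncomm_ring) qp * qi_mul_qi * h
    rw [this, inv_mul_cancel_left₀ star_qp_ne_zero]
    exact isHurwitz_qi.neg.mul hh
  · intro h
    refine ⟨qi * ((star qp)⁻¹ * x), isHurwitz_qi.mul h, ?_⟩
    rw [← mul_assoc, ← star_qp_eq, mul_inv_cancel_left₀ star_qp_ne_zero]

theorem inPH_star {x : Quat} (hx : InPH x) : InPH (star x) := by
  obtain ⟨h, hh, rfl⟩ := hx
  exact Hurwitz.inPH_coe_iff.2 (Hurwitz.p_dvd_star (Dvd.intro (⟨h, hh⟩ : Hurwitz) rfl))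

theorem ipLeech_eq_smul (x y : Fin 6 → Quat) :
    ipLeech x y = (-1 / 2 : ℝ) • ∑ s, star (x s) * y s := by
  rw [ipLeech, neg_mul, neg_div, neg_smul, neg_inj, inv_mul_eq_iff_eq_mul₀ two_ne_zero, two_mul,
    ← add_smul, add_halves, one_smul]

theorem star_ipLeech (x y : Fin 6 → Quat) : star (ipLeech x y) = ipLeech y x := by
  simp only [ipLeech_eq_smul, Quaternion.star_smul, star_sum, star_mul, star_star]

theorem ipLeech_add_right (x y w : Fin 6 → Quat) :
    ipLeech x (y + w) = ipLeech x y + ipLeech x w := by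
  simp only [ipLeech, Pi.add_apply, mul_add, sum_add_distrib]

theorem ipLeech_add_left (x y w : Fin 6 → Quat) :
    ipLeech (x + y) w = ipLeech x w + ipLeech y w := by
  simp only [ipLeech, Pi.add_apply, star_add, add_mul, sum_add_distrib, mul_add]

theorem ipLeech_rmulLam_right (x y : Fin 6 → Quat) (q : Quat) :
    ipLeech x (rmulLam y q) = ipLeech x y * q := by
  simp only [ipLeech, rmulLam, mul_assoc, sum_mul]

theorem ipLeech_rmulLam_left (x y : Fin 6 → Quat) (q : Quat) :
    ipLeech (rmulLam x q) y = star q * ipLeech x y := by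
  rw [← star_ipLeech, ipLeech_rmulLam_right, star_mul, star_ipLeech]

theorem ipLeech_neg_left (x y : Fin 6 → Quat) : ipLeech (-x) y = -ipLeech x y := by
  simp [ipLeech]

theorem ipLeech_neg_right (x y : Fin 6 → Quat) : ipLeech x (-y) = -ipLeech x y := by
  simp [ipLeech]

theorem ipLeech_self_eq_add_half (x : Fin 6 → Quat) :
    ipLeech x x = ipLeech x x / 2 + ipLeech x x / 2 := by
  rw [div_two_eq_smul, ← add_smul]; norm_num

theorem star_half_ipLeech_self (x : Fin 6 → Quat) :
    star (ipLeech x x / 2) = ipLeech x x / 2 := by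
  rw [div_two_eq_smul, Quaternion.star_smul, star_ipLeech]

theorem ipLL_Tlz (lam : Fin 6 → Quat) {z : Quat} (hz : z.re = 0) (v w : VL) :
    ipLL (Tlz lam z v) (Tlz lam z w) = ipLL v w := by
  obtain ⟨m, μ, ν⟩ := v
  obtain ⟨m', μ', ν'⟩ := w
  have pairing_right (m : Fin 6 → Quat) (μ ν : Quat) :
      star qp * (ν - (star qp)⁻¹ * ipLeech lam m +
        (star qp)⁻¹ * (z - ipLeech lam lam / 2) * μ) =
      star qp * ν - ipLeech lam m + (z - ipLeech lam lam / 2) * μ := by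
    rw [mul_add, mul_sub, mul_assoc _ _ μ, mul_inv_cancel_left₀ star_qp_ne_zero,
      mul_inv_cancel_left₀ star_qp_ne_zero]
  have pairing_left : star (ν - (star qp)⁻¹ * ipLeech lam m +
      (star qp)⁻¹ * (z - ipLeech lam lam / 2) * μ) * qp =
      star ν * qp - ipLeech m lam - star μ * (z + ipLeech lam lam / 2) := by
    rw [← star_star qp, ← star_mul, star_star qp, pairing_right, star_add, star_sub, star_mul,
      star_mul, star_sub, star_half_ipLeech_self, star_ipLeech, Quaternion.star_eq_neg.2 hz,
      star_star]
    noncomm_ring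
  simp only [ipLL, Tlz, mul_assoc (star μ), pairing_right, pairing_left, ipLeech_add_left,
    ipLeech_add_right, ipLeech_rmulLam_left, ipLeech_rmulLam_right]
  linear_combination (norm := noncomm_ring) star μ * ipLeech_self_eq_add_half lam * μ'

theorem Tlz_neg_Tlz (lam : Fin 6 → Quat) (z : Quat) (v : VL) :
    Tlz (-lam) (-z) (Tlz lam z v) = v := by
  obtain ⟨m, μ, ν⟩ := v
  simp only [Tlz, Prod.mk.injEq, true_and]
  constructor
  · ext1 s
    simp [rmulLam]
  · simp only [ipLeech_add_right, ipLeech_rmulLam_right, ipLeech_neg_left, ipLeech_neg_right,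
      neg_neg]
    linear_combination (norm := noncomm_ring)
      (star qp)⁻¹ * ipLeech_self_eq_add_half lam * μ

/-- The translation `T_{λ,z}` as a permutation of the ambient space, with inverse `T_{-λ,-z}`. -/
def TlzPerm (lam : Fin 6 → Quat) (z : Quat) : Equiv.Perm VL where
  toFun := Tlz lam z
  invFun := Tlz (-lam) (-z)
  left_inv := Tlz_neg_Tlz lam z
  right_inv v := by simpa using Tlz_neg_Tlz (-lam) (-z) v

theorem Tlz_zero_fst (lam : Fin 6 → Quat) (z ν : Quat) :
    Tlz lam z (0, 1, ν) = (lam, 1, ν + (star qp)⁻¹ * (z - ipLeech lam lam / 2)) := by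
  have rmulLam_one : rmulLam lam 1 = lam := funext fun s => mul_one (lam s)
  simp [Tlz, rmulLam_one, ipLeech]

theorem forall_memLL_Tlz_iff {lam : Fin 6 → Quat} (hlam : memLeech lam) {z : Quat} :
    (∀ v, memLL v → memLL (Tlz lam z v)) ↔ InPH (z - ipLeech lam lam / 2) := by
  constructor
  · intro h
    have := (h (0, 1, 0) ⟨memLeech_zero, one_mem hurwitzSubring, zero_mem hurwitzSubring⟩).2.2
    rwa [Tlz_zero_fst, zero_add, ← inPH_iff_isHurwitz] at this
  · rintro h v ⟨hm, hμ, hν⟩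
    have hm' := inPH_iff_isHurwitz.1 (hlam.inPH_ipLeech hm)
    rw [inPH_iff_isHurwitz] at h
    refine ⟨hm.add (hlam.rmul hμ), hμ, ?_⟩
    rw [Tlz, sub_eq_add_neg]
    exact (hν.add hm'.neg).add (h.mul hμ)

theorem inPH_neg_sub_half_ipLeech_neg {lam : Fin 6 → Quat} {z : Quat} (hz : z.re = 0)
    (h : InPH (z - ipLeech lam lam / 2)) : InPH (-z - ipLeech (-lam) (-lam) / 2) := by
  rw [ipLeech_neg_left, ipLeech_neg_right, neg_neg, ← Quaternion.star_eq_neg.2 hz,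
    ← star_half_ipLeech_self, ← star_sub]
  exact inPH_star h

/-- The roots of `L` of the form `(λ; 1, ν)`. -/
def heightOneRoots : Set VL := {y | memLL y ∧ ipLL y y = -2 ∧ y.2.1 = 1}

theorem baseRoot_mem_heightOneRoots : baseRoot ∈ heightOneRoots := by
  refine ⟨⟨memLeech_zero, one_mem hurwitzSubring, (one_mem hurwitzSubring : IsHurwitz 1).neg⟩,
    ?_, rfl⟩
  ext <;> simp [ipLL, ipLeech, baseRoot, qp]
  norm_num

theorem Tlz_mem_heightOneRoots {lam : Fin 6 → Quat} {z : Quat} (hz : z.re = 0)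
    (hL : ∀ v, memLL v → memLL (Tlz lam z v)) {y : VL} (hy : y ∈ heightOneRoots) :
    Tlz lam z y ∈ heightOneRoots :=
  ⟨hL y hy.1, (ipLL_Tlz lam hz y y).trans hy.2.1, hy.2.2⟩

open scoped Pointwise in
theorem Heis_le_stabilizer_heightOneRoots :
    Heis ≤ MulAction.stabilizer (Equiv.Perm VL) heightOneRoots := by
  refine (Subgroup.closure_le _).2 ?_
  rintro g ⟨lam, z, hlam, hz, hL, hg⟩
  refine MulAction.mem_stabilizer_set.2 fun y => ?_
  rw [Equiv.Perm.smul_def, hg]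
  refine ⟨fun hy => ?_, Tlz_mem_heightOneRoots hz hL⟩
  have hL_neg := (forall_memLL_Tlz_iff hlam.neg).2
    (inPH_neg_sub_half_ipLeech_neg hz ((forall_memLL_Tlz_iff hlam).1 hL))
  rw [← Tlz_neg_Tlz lam z y]
  exact Tlz_mem_heightOneRoots (by simp [hz]) hL_neg hy

theorem re_eq_zero_of_ipLL_self_eq {lam : Fin 6 → Quat} {ν : Quat}
    (h : ipLL (lam, 1, ν) (lam, 1, ν) = -2) :
    (star qp * (ν + 1) + ipLeech lam lam / 2).re = 0 := by
  have hre := congrArg (fun q : Quat => q.re) h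
  simp [ipLL, div_two_eq_smul, qp] at hre ⊢
  linarith

/-- The orbit of `(0; 1, −1)` under the Heisenberg group `𝕋` is
exactly the set of roots of `L` of the form `(λ; 1, ν)`. -/
theorem Heisenberg_orbit_of_base_root :
    (∀ y : VL, memLL y → ipLL y y = -2 → y.2.1 = 1 → ∃ g ∈ Heis, g baseRoot = y) ∧
    (∀ g, g ∈ Heis → memLL (g baseRoot) ∧
      ipLL (g baseRoot) (g baseRoot) = -2 ∧ (g baseRoot).2.1 = 1) := by
  constructor
  · rintro ⟨lam, μ, ν⟩ ⟨hlam, -, hν⟩ hnorm rfl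
    let z := star qp * (ν + 1) + ipLeech lam lam / 2
    have hz : z - ipLeech lam lam / 2 = star qp * (ν + 1) := add_sub_cancel_right _ _
    have hL : ∀ v, memLL v → memLL (Tlz lam z v) := by
      rw [forall_memLL_Tlz_iff hlam, hz, inPH_iff_isHurwitz, inv_mul_cancel_left₀ star_qp_ne_zero]
      exact hν.add (one_mem hurwitzSubring)
    refine ⟨TlzPerm lam z, Subgroup.subset_closure
      ⟨lam, z, hlam, re_eq_zero_of_ipLL_self_eq hnorm, hL, fun _ => rfl⟩, ?_⟩
    calc Tlz lam z baseRoot = (lam, 1, -1 + (star qp)⁻¹ * (star qp * (ν + 1))) := by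
          rw [baseRoot, Tlz_zero_fst, hz]
      _ = (lam, 1, ν) := by
          rw [inv_mul_cancel_left₀ star_qp_ne_zero, neg_add_cancel_comm_assoc]
  · intro g hg
    exact (MulAction.mem_stabilizer_set.1 (Heis_le_stabilizer_heightOneRoots hg) baseRoot).2
      baseRoot_mem_heightOneRoots
end
end
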